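/- The ℂ-vector space of homogeneous degree-10 polynomials p ∈ ℂ[z₀,…,z₄] with p ∘ g₁ = p and p ∘ g₂ = p has dimension 41. -/

import Mathlib

open MvPolynomial

/-- `ω = exp(2πi/5)`, a primitive fifth root of unity. -/
noncomputable def ω : ℂ := Complex.exp (2 * Real.pi * Complex.I / 5)

/-- Substitution `p ↦ p ∘ g₁` where `g₁(z₀,z₁,z₂,z₃,z₄) = (z₄,z₀,z₁,z₂,z₃)`. -/
noncomputable def compG1 : MvPolynomial (Fin 5) ℂ →ₐ[ℂ] MvPolynomial (Fin 5) ℂ :=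
  aeval fun i : Fin 5 => X (i - 1)

/-- Substitution `p ↦ p ∘ g₂` where `g₂(z₀,…,z₄) = (z₀, ω z₁, ω² z₂, ω³ z₃, ω⁴ z₄)`. -/
noncomputable def compG2 : MvPolynomial (Fin 5) ℂ →ₐ[ℂ] MvPolynomial (Fin 5) ℂ :=
  aeval fun i : Fin 5 => C (ω ^ (i : ℕ)) * X i

/-!
A homogeneous polynomial of degree `n` in variables indexed by `ZMod p` is invariant under the
diagonal map exactly when it only involves monomials of weight `∑ i, d i • i = 0`, and it is then
invariant under the cyclic shift exactly when its coefficients are constant on shift orbits of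
exponents. So the dimension is the number of such orbits. For `p ∣ n` and `p` odd only one exponent
of weight zero, the constant one, is fixed by the shift, so there are `(A + (p - 1)) / p` orbits,
where `A` is the number of exponents of weight zero. Averaging over additive characters
gives `p * A = (p + n - 1).choose n + (p - 1)`, because for a primitive character `ψ` the sum of
`ψ (weight d)` over all `d` of degree `n` is the coefficient of `X ^ n` in
`∏ i, (1 - ψ i X)⁻¹ = (1 - X ^ p)⁻¹`.
-/

section PrimeOrder

open MulAction Subgroup Function

variable {α : Type*} {p : ℕ} {e : Equiv.Perm α}

theorem fixedBy_eq_fixedPoints_of_pow_prime_eq_one (hp : p.Prime) (he : e ^ p = 1)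
    {g : zpowers e} (hg : g ≠ 1) : fixedBy α g = fixedPoints e := by
  have e_ne_one : e ≠ 1 := by
    rintro rfl
    exact hg (Subtype.ext (by simpa using g.2))
  have : Fact p.Prime := ⟨hp⟩
  have card_zpowers : Nat.card (zpowers e) = p := by
    rw [Nat.card_zpowers, orderOf_eq_prime he e_ne_one]
  obtain ⟨k, hk⟩ : ∃ k : ℤ, e ^ k = g := g.2
  obtain ⟨l, hl⟩ : ∃ l : ℤ, (g : Equiv.Perm α) ^ l = e := by
    obtain ⟨l, hl⟩ := mem_zpowers_of_prime_card card_zpowers hg (g' := ⟨e, mem_zpowers e⟩)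
    exact ⟨l, by simpa using congrArg Subtype.val hl⟩
  ext x
  constructor <;> intro hx
  · exact hl ▸ Equiv.Perm.zpow_apply_eq_self_of_apply_eq_self hx l
  · exact (hk ▸ Equiv.Perm.zpow_apply_eq_self_of_apply_eq_self hx k : (g : Equiv.Perm α) x = x)

theorem prime_mul_card_orbits_zpowers [Finite α] (hp : p.Prime) (he : e ^ p = 1) :
    p * Nat.card (orbitRel.Quotient (zpowers e) α) =
      Nat.card α + (p - 1) * Nat.card (fixedPoints e) := by
  classical
  have := Fintype.ofFinite α
  have burnside : Nat.card (orbitRel.Quotient (zpowers e) α) * orderOf e =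
      Nat.card α + (orderOf e - 1) * Nat.card (fixedPoints e) := by
    have h := sum_card_fixedBy_eq_card_orbits_mul_card_group (zpowers e) α
    simp only [← Nat.card_eq_fintype_card, Nat.card_zpowers] at h
    rw [orbitRel.Quotient, ← h, ← Finset.add_sum_erase _ _ (Finset.mem_univ 1),
      fixedBy_one_eq_univ, Nat.card_univ, Finset.sum_congr rfl fun g hg => by
        rw [fixedBy_eq_fixedPoints_of_pow_prime_eq_one hp he (Finset.ne_of_mem_erase hg)]]
    simp [Fintype.card_zpowers]
  rcases (Nat.dvd_prime hp).1 (orderOf_dvd_of_pow_eq_one he) with h | h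
  · obtain rfl : e = 1 := orderOf_eq_one_iff.1 h
    have card_fixedPoints : Nat.card (fixedPoints (1 : Equiv.Perm α)) = Nat.card α := by
      rw [Equiv.Perm.coe_one, fixedPoints_id, Nat.card_univ]
    have card_orbits :
        Nat.card (orbitRel.Quotient (zpowers (1 : Equiv.Perm α)) α) = Nat.card α := by
      simpa using burnside
    rw [card_orbits, card_fixedPoints, ← one_add_mul, Nat.add_sub_cancel' hp.one_le]
  · rw [mul_comm, ← h, burnside]

theorem apply_eq_of_orbitRel_zpowers {β : Type*} {φ : α → β} (hφ : ∀ a, φ (e a) = φ a) {a b : α}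
    (h : orbitRel (zpowers e) α a b) : φ a = φ b := by
  obtain ⟨⟨_, k, rfl⟩, rfl⟩ := h
  change φ ((e ^ k) b) = φ b
  induction k with
  | zero => rfl
  | succ k ih => rw [add_comm, zpow_add, zpow_one, Equiv.Perm.mul_apply, hφ, ih]
  | pred k ih => rw [← hφ, ← Equiv.Perm.mul_apply, ← zpow_one_add, add_sub_cancel, ih]

end PrimeOrder

section PermutationInvariants

open MulAction Subgroup

variable {σ R : Type*}

/-- The action of permutations of the variables on exponents of monomials: `e` moves the entry at
`i` to `e i`, so that `rename e` sends the monomial with exponent `d` to the one with exponent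
`permExponent e d`. -/
def permExponent : Equiv.Perm σ →* Equiv.Perm (σ →₀ ℕ) where
  toFun := Finsupp.equivCongrLeft
  map_one' := Equiv.ext Finsupp.equivMapDomain_refl
  map_mul' e e' := Equiv.ext (Finsupp.equivMapDomain_trans e' e)

theorem permExponent_apply (e : Equiv.Perm σ) (d : σ →₀ ℕ) (i : σ) :
    permExponent e d i = d (e.symm i) := by
  simp [permExponent]

section CommSemiring

variable [CommSemiring R]

theorem coeff_permExponent_rename (e : Equiv.Perm σ) (f : MvPolynomial σ R) (d : σ →₀ ℕ) :
    coeff (permExponent e d) (rename e f) = coeff d f := by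
  have h : permExponent e d = d.mapDomain e :=
    (Finsupp.equivCongrLeft_apply e d).trans (Finsupp.equivMapDomain_eq_mapDomain e d)
  rw [h, coeff_rename_mapDomain _ e.injective]

theorem coeff_eq_zero_of_mem_restrictSupport {S : Set (σ →₀ ℕ)} {f : MvPolynomial σ R}
    (hf : f ∈ restrictSupport R S) {d : σ →₀ ℕ} (hd : d ∉ S) : coeff d f = 0 := by
  by_contra h
  exact hd (hf (mem_support_iff.2 h))

variable {S : Set (σ →₀ ℕ)} [Finite S] {E : Equiv.Perm S}

variable (R E) in
/-- The combination of the orbit sums of monomials with exponents in `S`, under the action of the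
permutation `E` of `S`, that has the given coefficient on each orbit. -/
noncomputable def orbitSum : (orbitRel.Quotient (zpowers E) S → R) →ₗ[R] MvPolynomial σ R :=
  have := Fintype.ofFinite S
  ∑ d : S, monomial d ∘ₗ LinearMap.proj ⟦d⟧

theorem orbitSum_mem_restrictSupport (c : orbitRel.Quotient (zpowers E) S → R) :
    orbitSum R E c ∈ restrictSupport R S := by
  simp only [orbitSum, LinearMap.sum_apply, LinearMap.comp_apply]
  exact Submodule.sum_mem _ fun d _ => (monomial_mem_restrictSupport R).2 (.inl d.2)

theorem coeff_orbitSum (c : orbitRel.Quotient (zpowers E) S → R) (d : S) :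
    coeff d (orbitSum R E c) = c ⟦d⟧ := by
  classical
  simp [orbitSum, coeff_sum, coeff_monomial, Subtype.coe_inj]

theorem orbitSum_injective : Function.Injective (orbitSum R E) := by
  intro c c' h
  funext q
  induction q using Quotient.inductionOn with
  | h d => simpa only [coeff_orbitSum] using congrArg (coeff (d : σ →₀ ℕ)) h

end CommSemiring

variable [CommRing R]

theorem mem_ker_rename_sub_id_iff {e : Equiv.Perm σ} {f : MvPolynomial σ R} :
    f ∈ LinearMap.ker ((rename e).toLinearMap - LinearMap.id : MvPolynomial σ R →ₗ[R] _) ↔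
      ∀ d, coeff (permExponent e d) f = coeff d f := by
  rw [LinearMap.mem_ker, LinearMap.sub_apply, sub_eq_zero, MvPolynomial.ext_iff,
    ← (permExponent e).forall_congr_right]
  simp only [AlgHom.toLinearMap_apply, LinearMap.id_apply, coeff_permExponent_rename, eq_comm]

variable {S : Set (σ →₀ ℕ)} [Finite S] {e : Equiv.Perm σ} (hS : ∀ d, permExponent e d ∈ S ↔ d ∈ S)

theorem range_orbitSum :
    LinearMap.range (orbitSum R ((permExponent e).subtypePerm hS)) =
      restrictSupport R S ⊓ LinearMap.ker ((rename e).toLinearMap - LinearMap.id) := by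
  refine Submodule.ext fun f => ?_
  rw [Submodule.mem_inf, mem_ker_rename_sub_id_iff]
  constructor
  · rintro ⟨c, rfl⟩
    have outside {d} (hd : d ∉ S) : coeff d (orbitSum R _ c) = 0 :=
      coeff_eq_zero_of_mem_restrictSupport (orbitSum_mem_restrictSupport c) hd
    refine ⟨orbitSum_mem_restrictSupport c, fun d => ?_⟩
    by_cases hd : d ∈ S
    · rw [coeff_orbitSum c ⟨d, hd⟩, coeff_orbitSum c ⟨_, (hS d).2 hd⟩]
      exact congrArg c (Quotient.sound ⟨⟨_, mem_zpowers _⟩, rfl⟩)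
    · rw [outside hd, outside (mt (hS d).1 hd)]
  · rintro ⟨f_mem, f_inv⟩
    have coeff_eq {d d' : S}
        (h : orbitRel (zpowers ((permExponent e).subtypePerm hS)) S d d') :
        coeff (d : σ →₀ ℕ) f = coeff d' f :=
      apply_eq_of_orbitRel_zpowers (φ := fun d : S => coeff d f) (fun d => f_inv d) h
    refine ⟨Quotient.lift (fun d : S => coeff d f) fun _ _ => coeff_eq, ?_⟩
    ext d
    by_cases hd : d ∈ S
    · exact coeff_orbitSum _ ⟨d, hd⟩
    · rw [coeff_eq_zero_of_mem_restrictSupport f_mem hd,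
        coeff_eq_zero_of_mem_restrictSupport (orbitSum_mem_restrictSupport _) hd]

theorem finrank_restrictSupport_inf_ker_rename_sub_id [Nontrivial R] :
    Module.finrank R
        ↥(restrictSupport R S ⊓ LinearMap.ker ((rename e).toLinearMap - LinearMap.id)) =
      Nat.card (orbitRel.Quotient (zpowers ((permExponent e).subtypePerm hS)) S) := by
  have := Fintype.ofFinite (orbitRel.Quotient (zpowers ((permExponent e).subtypePerm hS)) S)
  rw [← range_orbitSum hS, LinearMap.finrank_range_of_inj orbitSum_injective,
    Module.finrank_fintype_fun_eq_card, Nat.card_eq_fintype_card]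

end PermutationInvariants

section DiagonalInvariants

variable {σ R : Type*}

section CommSemiring

variable [CommSemiring R]

/-- Substitution of the diagonal linear map `z ↦ (c i * z i)` into a polynomial. -/
noncomputable def scaleVars (c : σ → R) : MvPolynomial σ R →ₐ[R] MvPolynomial σ R :=
  aeval fun i => C (c i) * X i

theorem scaleVars_monomial (c : σ → R) (d : σ →₀ ℕ) (a : R) :
    scaleVars c (monomial d a) = monomial d ((d.prod fun i k => c i ^ k) * a) := by
  rw [scaleVars, aeval_monomial, algebraMap_eq, mul_comm _ a, monomial_eq]
  simp [mul_pow, Finsupp.prod, Finset.prod_mul_distrib, mul_assoc]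

theorem coeff_scaleVars (c : σ → R) (f : MvPolynomial σ R) (d : σ →₀ ℕ) :
    coeff d (scaleVars c f) = (d.prod fun i k => c i ^ k) * coeff d f := by
  classical
  induction f using MvPolynomial.induction_on' with
  | monomial u a =>
    rw [scaleVars_monomial, coeff_monomial, coeff_monomial]
    split_ifs with h
    · rw [h]
    · rw [mul_zero]
  | add f g hf hg => rw [map_add, coeff_add, hf, hg, coeff_add, mul_add]

end CommSemiring

theorem mem_ker_scaleVars_sub_id_iff [CommRing R] [IsDomain R] {c : σ → R} {f : MvPolynomial σ R} :
    f ∈ LinearMap.ker ((scaleVars c).toLinearMap - LinearMap.id) ↔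
      ∀ d, coeff d f ≠ 0 → (d.prod fun i k => c i ^ k) = 1 := by
  simp [sub_eq_zero, MvPolynomial.ext_iff, coeff_scaleVars, or_iff_not_imp_right,
    mul_left_eq_self₀]

end DiagonalInvariants

section Characters

theorem map_weight_eq_prod {N : ℕ} {R : Type*} [CommMonoid R] (ψ : AddChar (ZMod N) R)
    (d : ZMod N →₀ ℕ) :
    ψ (Finsupp.weight id d) = d.prod fun i k => ψ i ^ k := by
  rw [Finsupp.weight_apply]
  exact (map_prod ψ.toMonoidHom (fun i => Multiplicative.ofAdd (d i • i)) d.support).trans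
    (Finset.prod_congr rfl fun i _ => ψ.map_nsmul_eq_pow _ _)

variable {R : Type*} [CommRing R]

theorem mk_pow_mul_one_sub (a : R) :
    PowerSeries.mk (a ^ ·) * (1 - PowerSeries.C a * PowerSeries.X) = 1 := by
  simpa [PowerSeries.rescale_X, PowerSeries.rescale_mk] using
    congrArg (PowerSeries.rescale a) (PowerSeries.mk_one_mul_one_sub_eq_one R)

variable {N : ℕ} [NeZero N]

variable (R N) in
theorem mk_ite_dvd_mul_one_sub_X_pow :
    PowerSeries.mk (fun n => if N ∣ n then (1 : R) else 0) * (1 - PowerSeries.X ^ N) = 1 := by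
  ext n
  rw [mul_sub, mul_one, map_sub, PowerSeries.coeff_mul_X_pow', PowerSeries.coeff_one]
  simp only [PowerSeries.coeff_mk]
  rcases le_or_gt N n with h | h
  · have n_ne_zero : n ≠ 0 := ((NeZero.pos N).trans_le h).ne'
    simp [h, n_ne_zero, Nat.dvd_sub_iff_left h dvd_rfl]
  · have dvd_iff : N ∣ n ↔ n = 0 := ⟨fun hd => Nat.eq_zero_of_dvd_of_lt hd h, by simp +contextual⟩
    simp [h.not_ge, dvd_iff]

variable {ψ : AddChar (ZMod N) R}

theorem ker_scaleVars_sub_id_eq_weightedHomogeneousSubmodule [IsDomain R] (hψ : ψ.IsPrimitive) :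
    LinearMap.ker ((scaleVars ψ).toLinearMap - LinearMap.id) =
      weightedHomogeneousSubmodule R (id : ZMod N → ZMod N) 0 := by
  refine Submodule.ext fun f => ?_
  simp only [mem_ker_scaleVars_sub_id_iff, ← map_weight_eq_prod, hψ.zmod_char_eq_one_iff]
  rfl

theorem injective_of_isPrimitive (hψ : ψ.IsPrimitive) : Function.Injective ψ := by
  intro a b hab
  rw [← sub_eq_zero, ← hψ.zmod_char_eq_one_iff]
  apply (ψ.val_isUnit b).mul_right_cancel
  rw [← ψ.map_add_eq_mul, sub_add_cancel, hab, one_mul]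

theorem isPrimitiveRoot_apply_one (hψ : ψ.IsPrimitive) : IsPrimitiveRoot (ψ 1) N := by
  have pow_eq (k : ℕ) : ψ 1 ^ k = ψ k := by rw [← ψ.map_nsmul_eq_pow, nsmul_one]
  refine (IsPrimitiveRoot.iff_def _ _).2 ⟨?_, fun k hk => ?_⟩
  · rw [pow_eq, ZMod.natCast_self, ψ.map_zero_eq_one]
  · rw [pow_eq, hψ.zmod_char_eq_one_iff] at hk
    exact (ZMod.natCast_eq_zero_iff k N).1 hk

variable [IsDomain R]

theorem prod_one_sub_C_apply_mul_X (hψ : ψ.IsPrimitive) :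
    ∏ i, (1 - PowerSeries.C (ψ i) * PowerSeries.X) = (1 - PowerSeries.X ^ N : PowerSeries R) := by
  classical
  have C_inj : Function.Injective (PowerSeries.C (R := R)) := PowerSeries.C_injective
  have root := (isPrimitiveRoot_apply_one hψ).map_of_injective C_inj
  have inj : Function.Injective fun i => PowerSeries.C (ψ i) :=
    C_inj.comp (injective_of_isPrimitive hψ)
  have image_eq : Finset.univ.image (fun i => PowerSeries.C (ψ i)) =
      Polynomial.nthRootsFinset N (1 : PowerSeries R) := by
    refine Finset.eq_of_subset_of_card_le (Finset.image_subset_iff.2 fun i _ => ?_) ?_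
    · rw [Polynomial.mem_nthRootsFinset (NeZero.pos N), ← map_pow, ← ψ.map_nsmul_eq_pow,
        ZModModule.char_nsmul_eq_zero N i, ψ.map_zero_eq_one, map_one]
    · rw [root.card_nthRootsFinset, Finset.card_image_of_injective _ inj, Finset.card_univ,
        ZMod.card]
  calc ∏ i, (1 - PowerSeries.C (ψ i) * PowerSeries.X)
    _ = ∏ ζ ∈ Polynomial.nthRootsFinset N (1 : PowerSeries R), (1 - ζ * PowerSeries.X) := by
      rw [← image_eq, Finset.prod_image inj.injOn]
    _ = 1 - PowerSeries.X ^ N := by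
      rw [← root.pow_sub_pow_eq_prod_sub_mul _ _ (NeZero.pos N), one_pow]

theorem prod_mk_pow_apply (hψ : ψ.IsPrimitive) :
    ∏ i, PowerSeries.mk (ψ i ^ ·) = PowerSeries.mk fun n => if N ∣ n then (1 : R) else 0 := by
  have prod_mul : (∏ i, PowerSeries.mk (ψ i ^ ·)) * (1 - PowerSeries.X ^ N) = 1 := by
    rw [← prod_one_sub_C_apply_mul_X hψ, ← Finset.prod_mul_distrib]
    exact Finset.prod_eq_one fun i _ => mk_pow_mul_one_sub (ψ i)
  have mk_mul := mk_ite_dvd_mul_one_sub_X_pow R N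
  exact mul_right_cancel₀ (right_ne_zero_of_mul_eq_one mk_mul) (prod_mul.trans mk_mul.symm)

theorem sum_finsuppAntidiag_map_weight (hψ : ψ.IsPrimitive) (n : ℕ) :
    ∑ d ∈ Finset.univ.finsuppAntidiag n, ψ (Finsupp.weight id d) = if N ∣ n then 1 else 0 := by
  have h := congrArg (PowerSeries.coeff n) (prod_mk_pow_apply hψ)
  simpa [PowerSeries.coeff_prod, map_weight_eq_prod, Finsupp.prod_fintype] using h

end Characters

section BalancedExponents

open Finset

theorem permExponent_subRight_pow (N : ℕ) :
    permExponent (Equiv.subRight (1 : ZMod N)) ^ N = 1 := by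
  have subRight_eq : Equiv.subRight (1 : ZMod N) = (Equiv.addRight 1)⁻¹ := by
    ext; simp [sub_eq_add_neg]
  rw [← map_pow, subRight_eq, inv_pow]
  simp

/-- The exponents of total degree `n` in variables indexed by `ZMod N` whose weight `∑ i, d i • i`
vanishes in `ZMod N`. -/
noncomputable def balancedExponents (N : ℕ) [NeZero N] (n : ℕ) : Finset (ZMod N →₀ ℕ) :=
  {d ∈ univ.finsuppAntidiag n | Finsupp.weight id d = 0}

variable {N n : ℕ} [NeZero N]

theorem mem_balancedExponents_iff {d : ZMod N →₀ ℕ} :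
    d ∈ balancedExponents N n ↔ ∑ i, d i = n ∧ ∑ i, d i • i = 0 := by
  simp [balancedExponents, Finsupp.weight_eq_sum]

theorem restrictSupport_balancedExponents (R : Type*) [CommRing R] :
    restrictSupport R (balancedExponents N n : Set (ZMod N →₀ ℕ)) =
      homogeneousSubmodule (ZMod N) R n ⊓
        weightedHomogeneousSubmodule R (id : ZMod N → ZMod N) 0 := by
  rw [homogeneousSubmodule_eq_finsupp_supported, weightedHomogeneousSubmodule_eq_finsupp_supported]
  refine Submodule.ext fun f => ?_
  rw [Submodule.mem_inf, AddMonoidAlgebra.mem_supported, AddMonoidAlgebra.mem_supported,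
    ← Set.subset_inter_iff, mem_restrictSupport_iff]
  congr!
  ext d
  simp [mem_balancedExponents_iff, Finsupp.degree_eq_sum, Finsupp.weight_eq_sum]

theorem permExponent_subRight_mem_balancedExponents_iff (hn : N ∣ n) (d : ZMod N →₀ ℕ) :
    permExponent (Equiv.subRight 1) d ∈ (balancedExponents N n : Set (ZMod N →₀ ℕ)) ↔
      d ∈ (balancedExponents N n : Set (ZMod N →₀ ℕ)) := by
  have degree_eq : ∑ i, d (i + 1) = ∑ i, d i := Equiv.sum_comp (Equiv.addRight 1) d
  have weight_eq (h : ∑ i, d i = n) : ∑ i, d (i + 1) • i = ∑ i, d i • i := calc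
    _ = ∑ i, d i • (i - 1) := by
      simpa using Equiv.sum_comp (Equiv.addRight 1) fun i => d i • (i - 1)
    _ = ∑ i, d i • i - (n : ZMod N) := by
      simp only [smul_sub, sum_sub_distrib]
      rw [← sum_smul, h, nsmul_one]
    _ = ∑ i, d i • i := by rw [(ZMod.natCast_eq_zero_iff n N).2 hn, sub_zero]
  simp only [mem_coe, mem_balancedExponents_iff, permExponent_apply,
    Equiv.subRight_symm_apply, degree_eq]
  exact and_congr_right fun h => by rw [weight_eq h]

theorem sum_univ_zmod_eq_zero (hN : Odd N) : ∑ i : ZMod N, i = 0 := by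
  have neg_eq : ∑ i : ZMod N, -i = ∑ i : ZMod N, i := Equiv.sum_comp (Equiv.neg _) fun i => i
  rw [sum_neg_distrib, neg_eq_iff_add_eq_zero] at neg_eq
  exact (ZMod.add_self_eq_zero_iff_eq_zero hN).1 neg_eq

theorem eq_apply_zero_of_permExponent_subRight_eq_self {d : ZMod N →₀ ℕ}
    (h : permExponent (Equiv.subRight 1) d = d) (i : ZMod N) : d i = d 0 := by
  have succ_eq (j : ZMod N) : d (j + 1) = d j := by
    simpa [permExponent_apply] using DFunLike.congr_fun h j
  rw [← ZMod.natCast_zmod_val i]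
  induction i.val with
  | zero => rw [Nat.cast_zero]
  | succ k ih => rw [Nat.cast_succ, succ_eq, ih]

theorem card_fixedPoints_balancedExponents (hN : Odd N) (hn : N ∣ n) :
    Nat.card (Function.fixedPoints ((permExponent (Equiv.subRight 1)).subtypePerm
      (permExponent_subRight_mem_balancedExponents_iff (N := N) hn))) = 1 := by
  have const_mem : Finsupp.equivFunOnFinite.symm (fun _ => n / N) ∈ balancedExponents N n := by
    refine mem_balancedExponents_iff.2 ⟨by simp [ZMod.card, Nat.mul_div_cancel' hn], ?_⟩
    exact smul_sum.symm.trans (by rw [sum_univ_zmod_eq_zero hN, smul_zero])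
  rw [Nat.card_coe_set_eq, Set.ncard_eq_one]
  refine ⟨⟨_, const_mem⟩, Set.eq_singleton_iff_unique_mem.2 ⟨?_, ?_⟩⟩
  · refine Subtype.ext (Finsupp.ext fun i => ?_)
    simp [permExponent_apply]
  · rintro ⟨d, hd⟩ fixed
    have eq_zero := eq_apply_zero_of_permExponent_subRight_eq_self (congrArg Subtype.val fixed)
    have degree_eq : N * d 0 = n := by
      simpa [eq_zero, ZMod.card] using (mem_balancedExponents_iff.1 hd).1
    refine Subtype.ext (Finsupp.ext fun i => ?_)
    simp [eq_zero i, ← degree_eq, NeZero.pos N]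

theorem prime_mul_card_balancedExponents {p : ℕ} [Fact p.Prime] (hn : p ∣ n) :
    p * #(balancedExponents p n) = (p + n - 1).choose n + (p - 1) := by
  have hψ := ZMod.isPrimitive_stdAddChar p
  set ψ := ZMod.stdAddChar (N := p)
  have sum_of_ne_zero (j : ZMod p) (hj : j ≠ 0) :
      ∑ d ∈ univ.finsuppAntidiag n, ψ (j * Finsupp.weight id d) = 1 := by
    simpa [hn] using sum_finsuppAntidiag_map_weight (AddChar.IsPrimitive.of_ne_one (hψ hj)) n
  have sum_of_zero : ∑ d ∈ univ.finsuppAntidiag n, ψ (0 * Finsupp.weight id d) =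
      (p + n - 1).choose n := by
    simp [card_finsuppAntidiag_nat_eq_choose, ZMod.card]
  have complex_eq : (p * #(balancedExponents p n) : ℂ) = (p + n - 1).choose n + (p - 1 : ℕ) := calc
    _ = ∑ d ∈ univ.finsuppAntidiag n, ∑ j, ψ (j * Finsupp.weight id d) := by
      simp_rw [AddChar.sum_mulShift _ hψ, ZMod.card]
      simp [balancedExponents, sum_ite, mul_comm]
    _ = ∑ j, ∑ d ∈ univ.finsuppAntidiag n, ψ (j * Finsupp.weight id d) := sum_comm
    _ = _ := by
      rw [← add_sum_erase _ _ (mem_univ 0), sum_of_zero,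
        sum_congr rfl fun j hj => sum_of_ne_zero j (ne_of_mem_erase hj)]
      simp [card_erase_of_mem, ZMod.card]
  exact_mod_cast complex_eq

end BalancedExponents

/-- The polynomials of degree `n` in variables indexed by `ZMod N` that are invariant under the
cyclic shift of the variables and under `z i ↦ ψ i * z i`. For a primitive character `ψ` these two
maps generate the Heisenberg group of `ZMod N`. -/
noncomputable def heisenbergInvariants {N : ℕ} {R : Type*} [CommRing R] (ψ : AddChar (ZMod N) R)
    (n : ℕ) : Submodule R (MvPolynomial (ZMod N) R) :=
  homogeneousSubmodule (ZMod N) R n ⊓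
    LinearMap.ker ((rename (Equiv.subRight 1)).toLinearMap - LinearMap.id) ⊓
    LinearMap.ker ((scaleVars ψ).toLinearMap - LinearMap.id)

theorem stmt_18_general {p n : ℕ} [Fact p.Prime] (hp : Odd p) (hn : p ∣ n) {R : Type*} [CommRing R]
    [IsDomain R] {ψ : AddChar (ZMod p) R} (hψ : ψ.IsPrimitive) :
    p ^ 2 * Module.finrank R (heisenbergInvariants ψ n) =
      (p + n - 1).choose n + (p ^ 2 - 1) := by
  have shift_mem := permExponent_subRight_mem_balancedExponents_iff (N := p) hn
  have shift_pow : (permExponent (Equiv.subRight 1)).subtypePerm shift_mem ^ p = 1 := by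
    simp only [Equiv.Perm.subtypePerm_pow, permExponent_subRight_pow p]
    rfl
  have finrank_eq := finrank_restrictSupport_inf_ker_rename_sub_id (R := R) shift_mem
  have card_orbits := prime_mul_card_orbits_zpowers Fact.out shift_pow
  rw [card_fixedPoints_balancedExponents hp hn, mul_one, Nat.card_coe_set_eq,
    Set.ncard_coe_finset] at card_orbits
  calc p ^ 2 * Module.finrank R (heisenbergInvariants ψ n)
    _ = p * (balancedExponents p n).card + p * (p - 1) := by
      rw [heisenbergInvariants, ker_scaleVars_sub_id_eq_weightedHomogeneousSubmodule hψ,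
        inf_right_comm, ← restrictSupport_balancedExponents, finrank_eq, sq, mul_assoc,
        card_orbits, mul_add]
    _ = (p + n - 1).choose n + (p ^ 2 - 1) := by
      have sq_sub : p ^ 2 - 1 = (p + 1) * (p - 1) := by simpa using Nat.sq_sub_sq p 1
      rw [prime_mul_card_balancedExponents hn, sq_sub]
      ring

theorem omega_isPrimitiveRoot : IsPrimitiveRoot ω 5 := by
  simpa [ω] using Complex.isPrimitiveRoot_exp 5 (by norm_num)

theorem compG1_eq_rename : compG1 = rename (Equiv.subRight (1 : ZMod 5)) := by
  ext1 i
  rw [compG1, aeval_X]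
  exact (rename_X (R := ℂ) (Equiv.subRight (1 : ZMod 5)) i).symm

theorem inf_ker_compG_eq_heisenbergInvariants (n : ℕ) :
    homogeneousSubmodule (Fin 5) ℂ n ⊓ LinearMap.ker (compG1.toLinearMap - LinearMap.id) ⊓
        LinearMap.ker (compG2.toLinearMap - LinearMap.id) =
      heisenbergInvariants (AddChar.zmodChar 5 omega_isPrimitiveRoot.pow_eq_one) n := by
  rw [compG1_eq_rename]
  rfl

/-- The space of homogeneous degree-10 polynomials in `ℂ[z₀,…,z₄]` invariant under
`g₁` and `g₂` has dimension 41. -/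
theorem stmt_18 :
    Module.finrank ℂ
      ↥(homogeneousSubmodule (Fin 5) ℂ 10 ⊓
        LinearMap.ker (compG1.toLinearMap - LinearMap.id) ⊓
        LinearMap.ker (compG2.toLinearMap - LinearMap.id)) = 41 := by
  have : Fact (Nat.Prime 5) := ⟨by norm_num⟩
  have hψ := AddChar.zmodChar_primitive_of_primitive_root 5 omega_isPrimitiveRoot
  have five_sq_mul_finrank := stmt_18_general (n := 10) (by decide) (by norm_num) hψ
  rw [inf_ker_compG_eq_heisenbergInvariants]
  exact Nat.eq_of_mul_eq_mul_left (by norm_num : 0 < 5 ^ 2) (five_sq_mul_finrank.trans (by decide))
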